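/- arXiv:1906.07404 — 5 statements merged into one kernel-verified Lean document; each statement's English description precedes it below -/
import Mathlib

section
/- Let K be an abstract simplicial complex of dimension i that is pure, orientable, connected (any two i-faces are joined by a path of consecutively connected i-faces), and carries the weights w(F) = 1 for every i-face F and w(E) = deg E for every (i−1)-face E. Assume (1) there is a constant D > 0 with Σ_{E ∈ ∂F} 1/deg E = 1/D for every i-face F, and (2) κ(F, F') ≥ k for every pair of connected i-faces F ~ F' and some real number k. Then every eigenvalue λ of the i-down Laplacian Δ_i^down with λ ≠ 0 and λ ≠ 2/D − (i+1) satisfies λ ≥ (i+1)(k − 1) + 2/D. -/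
/-!
The proof is a Lichnerowicz-type argument. Averaging a function `f` against `m_F^ε` gives
`(1 - ε) f(F) + ε/(i+1) · ((2/D) f(F) - (Δf)(F))` (`sum_pm_mul`), so on an eigenfunction it acts
as multiplication by `1 - ε (1 - (2/D - λ)/(i+1))`. Constants have eigenvalue `2/D - (i+1)`, so
the eigenfunction at hand is not constant, and by connectedness some connected pair `F ~ F'`
maximises `f(F) - f(F') > 0`; this maximum is a Lipschitz constant of `f`. The easy half of
Kantorovich duality (`le_Wass`) then yields `κ_ε(F, F')/ε ≤ 1 - (2/D - λ)/(i+1)` for this pair.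

It remains to let `ε → 0`. Since `ricci` is a `limUnder`, the limit has to be shown to exist:
convexity of the transport cost makes `κ_ε/ε` nonincreasing in `ε` (`kappa_antitone`), and the
bound just obtained keeps it bounded above.
-/

open Finset Filter

namespace SCRicci

variable {V : Type*}

/-- `K` is an abstract simplicial complex: faces are nonempty finite sets and
nonempty subsets of faces are again faces. -/
def IsComplex [DecidableEq V] (K : Finset (Finset V)) : Prop :=
  ∀ F ∈ K, F.Nonempty ∧ ∀ E : Finset V, E ⊆ F → E.Nonempty → E ∈ K

/-- The set `S_i(K)` of `i`-faces of `K` (faces of cardinality `i+1`). -/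
def faces [DecidableEq V] (K : Finset (Finset V)) (i : ℕ) : Finset (Finset V) :=
  K.filter fun F => F.card = i + 1

/-- Two `i`-faces are connected, `F ~ F'`, if they are distinct and share a common
`(i-1)`-face, which is necessarily `F ∩ F'`. -/
def Conn [DecidableEq V] (i : ℕ) (F F' : Finset V) : Prop :=
  F ≠ F' ∧ (F ∩ F').card = i

noncomputable section

/-- The degree of an `(i-1)`-face `E`: the sum of the weights of the `i`-faces
containing `E`. -/
def deg [DecidableEq V] (K : Finset (Finset V)) (w : Finset V → ℝ) (i : ℕ)
    (E : Finset V) : ℝ :=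
  ∑ F ∈ faces K i, if E ⊆ F then w F else 0

/-- `Chain K i n F F'`: there is a path of length `n` of consecutively connected
`i`-faces from `F` to `F'`. -/
def Chain [DecidableEq V] (K : Finset (Finset V)) (i : ℕ) :
    ℕ → Finset V → Finset V → Prop
  | 0, F, F' => F = F'
  | n + 1, F, F' => ∃ G ∈ faces K i, Conn i F G ∧ Chain K i n G F'

/-- The distance between two `i`-faces: the length of a shortest path of
consecutively connected `i`-faces. -/
def fdist [DecidableEq V] (K : Finset (Finset V)) (i : ℕ) (F F' : Finset V) : ℕ :=
  sInf {n | Chain K i n F F'}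

/-- `K` is connected in dimension `i`: any two `i`-faces are joined by a path of
consecutively connected `i`-faces. -/
def ComplexConnected [DecidableEq V] (K : Finset (Finset V)) (i : ℕ) : Prop :=
  ∀ F ∈ faces K i, ∀ F' ∈ faces K i, ∃ n, Chain K i n F F'

/-- The probability measure `m_F^ε` on the `i`-faces of `K`. -/
def pm [DecidableEq V] (K : Finset (Finset V)) (w : Finset V → ℝ) (i : ℕ) (ε : ℝ)
    (F F' : Finset V) : ℝ :=
  if F' = F then
    1 - ε + ε / ((i : ℝ) + 1) * ∑ E ∈ F.powersetCard i, w F / deg K w i E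
  else if F' ∈ faces K i ∧ (F ∩ F').card = i then
    ε * w F' / (((i : ℝ) + 1) * deg K w i (F ∩ F'))
  else 0

/-- The 1-Wasserstein distance between two measures on the `i`-faces of `K`:
the infimum of the transport cost over all couplings. -/
def Wass [DecidableEq V] (K : Finset (Finset V)) (i : ℕ) (μ ν : Finset V → ℝ) : ℝ :=
  sInf {c : ℝ | ∃ A : Finset V → Finset V → ℝ,
    (∀ F₁ F₂, 0 ≤ A F₁ F₂) ∧
    (∀ F₁ ∈ faces K i, ∑ F₂ ∈ faces K i, A F₁ F₂ = μ F₁) ∧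
    (∀ F₂ ∈ faces K i, ∑ F₁ ∈ faces K i, A F₁ F₂ = ν F₂) ∧
    c = ∑ F₁ ∈ faces K i, ∑ F₂ ∈ faces K i, A F₁ F₂ * (fdist K i F₁ F₂ : ℝ)}

/-- The `ε`-Ricci curvature of two distinct `i`-faces:
`κ_ε(F, F') = 1 - W(m_F^ε, m_{F'}^ε) / d(F, F')`. -/
def kappaEps [DecidableEq V] (K : Finset (Finset V)) (w : Finset V → ℝ) (i : ℕ)
    (ε : ℝ) (F F' : Finset V) : ℝ :=
  1 - Wass K i (pm K w i ε F) (pm K w i ε F') / (fdist K i F F' : ℝ)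

/-- The Ricci curvature `κ(F, F')`: the limit of `κ_ε(F, F') / ε` as `ε → 0+`. -/
def ricci [DecidableEq V] (K : Finset (Finset V)) (w : Finset V → ℝ) (i : ℕ)
    (F F' : Finset V) : ℝ :=
  limUnder (nhdsWithin (0 : ℝ) (Set.Ioi 0)) fun ε => kappaEps K w i ε F F' / ε

/-- The `i`-down Laplacian `Δ_i^down` for the weights `w(F) = 1` on `i`-faces and
`w(E) = deg E` on `(i-1)`-faces:
`(Δ_i^down f)(F) = Σ_{E ∈ ∂F} (1 / deg E) · (f F - Σ_{F' ∈ S_i, F' ≠ F, E ⊆ F'} f F')`. -/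
def lapDown [DecidableEq V] (K : Finset (Finset V)) (w : Finset V → ℝ) (i : ℕ)
    (f : Finset V → ℝ) (F : Finset V) : ℝ :=
  ∑ E ∈ F.powersetCard i, (1 / deg K w i E) *
    (f F - ∑ F' ∈ (faces K i).filter (fun F' => F' ≠ F ∧ E ⊆ F'), f F')

/-- `K` is pure of dimension `i`: every face is contained in an `i`-face and
there are no faces of dimension larger than `i` (so every facet has dimension `i`). -/
def IsPure [DecidableEq V] (K : Finset (Finset V)) (i : ℕ) : Prop :=
  (∀ F ∈ K, F.card ≤ i + 1) ∧ ∀ F ∈ K, ∃ G ∈ K, F ⊆ G ∧ G.card = i + 1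

/-- The sign of the `(i-1)`-face `E` inside the boundary of the `i`-face `F`, both
taken with the orientation induced by the linear order on the vertices: it is
`(-1)^j` where `j` is the position in `F` of the vertex removed from `F` to get `E`. -/
def sgnBd [LinearOrder V] (F E : Finset V) : ℤ :=
  ∏ v ∈ F \ E, (-1 : ℤ) ^ (F.filter fun u => u < v).card

/-- `K` is orientable in dimension `i`: the `i`-faces can be oriented (recorded by a
sign `o F = ±1` relative to the orientation induced by the linear order on the
vertices) in such a way that any two connected `i`-faces induce opposite
orientations on their common `(i-1)`-face. -/
def Orientable [LinearOrder V] (K : Finset (Finset V)) (i : ℕ) : Prop :=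
  ∃ o : Finset V → ℤ, (∀ F ∈ faces K i, o F = 1 ∨ o F = -1) ∧
    ∀ F ∈ faces K i, ∀ F' ∈ faces K i, Conn i F F' →
      o F * o F' * sgnBd F (F ∩ F') * sgnBd F' (F ∩ F') = -1

section Helpers

variable [DecidableEq V] {K : Finset (Finset V)} {w : Finset V → ℝ} {i : ℕ}

/-! ### Degrees and averages -/

lemma deg_eq_card (hw1 : ∀ F ∈ faces K i, w F = 1) (E : Finset V) :
    deg K w i E = (((faces K i).filter fun F => E ⊆ F).card : ℝ) := by
  unfold deg
  rw [← Finset.sum_filter, Finset.sum_congr rfl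
    (fun F hF => hw1 F (Finset.mem_filter.1 hF).1)]
  simp

lemma deg_nonneg (hw1 : ∀ F ∈ faces K i, w F = 1) (E : Finset V) : 0 ≤ deg K w i E := by
  rw [deg_eq_card hw1]; positivity

lemma card_of_mem_faces {F : Finset V} (hF : F ∈ faces K i) : F.card = i + 1 :=
  (Finset.mem_filter.1 hF).2

/-- Summing over the boundary faces `E` of `F` and the other `i`-faces containing `E` is the same
as summing over the `i`-faces connected to `F`, because `E` is recovered as `F ∩ F'`. -/
lemma sum_boundary (g f : Finset V → ℝ) {F : Finset V} (hF : F ∈ faces K i) :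
    ∑ E ∈ F.powersetCard i, g E *
      ∑ F' ∈ (faces K i).filter (fun F' => F' ≠ F ∧ E ⊆ F'), f F' =
    ∑ F' ∈ (faces K i).filter (fun F' => F' ≠ F ∧ (F ∩ F').card = i), g (F ∩ F') * f F' := by
  have key : ∀ E ∈ F.powersetCard i, ∀ F' ∈ faces K i, F' ≠ F → E ⊆ F' → F ∩ F' = E := by
    intro E hE F' hF' hne hEF'
    obtain ⟨hEF, hEc⟩ := Finset.mem_powersetCard.1 hE
    symm
    apply Finset.eq_of_subset_of_card_le (Finset.subset_inter hEF hEF')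
    by_contra! hlt
    have hFc := card_of_mem_faces hF
    have hFc' := card_of_mem_faces hF'
    have h1 : F ∩ F' = F :=
      Finset.eq_of_subset_of_card_le Finset.inter_subset_left (by omega)
    have h2 : F ∩ F' = F' :=
      Finset.eq_of_subset_of_card_le Finset.inter_subset_right (by omega)
    exact hne (h2.symm.trans h1)
  simp only [Finset.mul_sum]
  rw [Finset.sum_sigma']
  refine Finset.sum_bij' (fun p _ => p.2) (fun F' _ => ⟨F ∩ F', F'⟩) ?_ ?_ ?_ ?_ ?_
  · rintro ⟨E, F'⟩ h
    simp only [Finset.mem_sigma, Finset.mem_filter] at h ⊢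
    refine ⟨h.2.1, h.2.2.1, ?_⟩
    rw [key E h.1 F' h.2.1 h.2.2.1 h.2.2.2]
    exact (Finset.mem_powersetCard.1 h.1).2
  · intro F' h
    simp only [Finset.mem_sigma, Finset.mem_filter, Finset.mem_powersetCard] at h ⊢
    exact ⟨⟨Finset.inter_subset_left, h.2.2⟩, h.1, h.2.1, Finset.inter_subset_right⟩
  · rintro ⟨E, F'⟩ h
    simp only [Finset.mem_sigma, Finset.mem_filter] at h
    simp only [key E h.1 F' h.2.1 h.2.2.1 h.2.2.2]
  · intro F' h
    rfl
  · rintro ⟨E, F'⟩ h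
    simp only [Finset.mem_sigma, Finset.mem_filter] at h
    simp only [key E h.1 F' h.2.1 h.2.2.1 h.2.2.2]

/-- The average of `f` against `m_F^ε`, expressed through the down Laplacian. -/
lemma sum_pm_mul (hw1 : ∀ F ∈ faces K i, w F = 1) {D : ℝ}
    (hD' : ∀ F ∈ faces K i, ∑ E ∈ F.powersetCard i, 1 / deg K w i E = 1 / D)
    (ε : ℝ) (f : Finset V → ℝ) {F : Finset V} (hF : F ∈ faces K i) :
    ∑ F' ∈ faces K i, pm K w i ε F F' * f F' =
      (1 - ε) * f F + ε / ((i : ℝ) + 1) * (2 / D * f F - lapDown K w i f F) := by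
  have hlap : lapDown K w i f F = 1 / D * f F -
      ∑ F' ∈ (faces K i).filter (fun F' => F' ≠ F ∧ (F ∩ F').card = i),
        1 / deg K w i (F ∩ F') * f F' := by
    rw [← sum_boundary (fun E => 1 / deg K w i E) f hF, ← hD' F hF, Finset.sum_mul,
      ← Finset.sum_sub_distrib]
    exact Finset.sum_congr rfl fun E _ => by ring
  have hsplit : ∑ F' ∈ faces K i, pm K w i ε F F' * f F' = pm K w i ε F F * f F +
      ε / ((i : ℝ) + 1) *
        ∑ F' ∈ (faces K i).filter (fun F' => F' ≠ F ∧ (F ∩ F').card = i),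
          1 / deg K w i (F ∩ F') * f F' := by
    rw [← Finset.add_sum_erase _ _ hF, Finset.mul_sum]
    congr 1
    rw [← Finset.filter_filter, ← Finset.filter_ne' (faces K i) F,
      Finset.sum_filter (s := (faces K i).filter (fun F' => F' ≠ F))]
    refine Finset.sum_congr rfl fun F' hF' => ?_
    obtain ⟨h1, h2⟩ := Finset.mem_filter.1 hF'
    unfold pm
    rw [if_neg h2]
    by_cases h : (F ∩ F').card = i
    · rw [if_pos ⟨h1, h⟩, if_pos h, hw1 F' h1, mul_one, ← div_div]
      ring
    · rw [if_neg (fun h' => h h'.2), if_neg h, zero_mul]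
  rw [hsplit, hlap]
  have : pm K w i ε F F = 1 - ε + ε / ((i : ℝ) + 1) * (1 / D) := by
    simp only [pm, if_true, hw1 F hF, hD' F hF]
  rw [this]
  ring

lemma lapDown_const (hw1 : ∀ F ∈ faces K i, w F = 1) {D : ℝ}
    (hD' : ∀ F ∈ faces K i, ∑ E ∈ F.powersetCard i, 1 / deg K w i E = 1 / D)
    (f : Finset V → ℝ) (c : ℝ) (hf : ∀ F ∈ faces K i, f F = c)
    {F : Finset V} (hF : F ∈ faces K i) :
    lapDown K w i f F = (2 / D - ((i : ℝ) + 1)) * c := by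
  have hterm : ∀ E ∈ F.powersetCard i, (1 / deg K w i E) *
      (f F - ∑ F' ∈ (faces K i).filter (fun F' => F' ≠ F ∧ E ⊆ F'), f F') =
      1 / deg K w i E * (2 * c) - c := by
    intro E hE
    have hmem : F ∈ (faces K i).filter (fun F' => E ⊆ F') :=
      Finset.mem_filter.2 ⟨hF, (Finset.mem_powersetCard.1 hE).1⟩
    have hpos : 0 < deg K w i E := by
      rw [deg_eq_card hw1]
      exact_mod_cast Finset.card_pos.2 ⟨F, hmem⟩
    have hsum : ∑ F' ∈ (faces K i).filter (fun F' => F' ≠ F ∧ E ⊆ F'), f F' =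
        (deg K w i E - 1) * c := by
      rw [Finset.sum_congr rfl (fun F' hF' => hf F' (Finset.mem_filter.1 hF').1),
        Finset.sum_const, nsmul_eq_mul]
      congr 1
      have : (faces K i).filter (fun F' => F' ≠ F ∧ E ⊆ F') =
          ((faces K i).filter (fun F' => E ⊆ F')).erase F := by
        ext G; simp only [Finset.mem_filter, Finset.mem_erase]; tauto
      rw [this, Finset.cast_card_erase_of_mem hmem, deg_eq_card hw1]
    rw [hsum, hf F hF]
    field_simp
    ring
  unfold lapDown
  rw [Finset.sum_congr rfl hterm, Finset.sum_sub_distrib, ← Finset.sum_mul, hD' F hF,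
    Finset.sum_const, Finset.card_powersetCard, card_of_mem_faces hF]
  simp
  ring

lemma sum_pm (hw1 : ∀ F ∈ faces K i, w F = 1) {D : ℝ}
    (hD' : ∀ F ∈ faces K i, ∑ E ∈ F.powersetCard i, 1 / deg K w i E = 1 / D)
    (ε : ℝ) {F : Finset V} (hF : F ∈ faces K i) :
    ∑ F' ∈ faces K i, pm K w i ε F F' = 1 := by
  have h := sum_pm_mul hw1 hD' ε (fun _ => 1) hF
  rw [lapDown_const hw1 hD' (fun _ => 1) 1 (fun _ _ => rfl) hF] at h
  simp only [mul_one] at h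
  rw [h]
  field_simp
  ring

lemma pm_nonneg (hw1 : ∀ F ∈ faces K i, w F = 1) {ε : ℝ} (h0 : 0 ≤ ε) (h1 : ε ≤ 1)
    {F : Finset V} (hF : F ∈ faces K i) (F' : Finset V) : 0 ≤ pm K w i ε F F' := by
  unfold pm
  split_ifs with h h'
  · rw [hw1 F hF]
    have : 0 ≤ ∑ E ∈ F.powersetCard i, 1 / deg K w i E :=
      Finset.sum_nonneg fun E _ => div_nonneg zero_le_one (deg_nonneg hw1 E)
    have h2 : 0 ≤ ε / ((i : ℝ) + 1) := by positivity
    have := mul_nonneg h2 this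
    linarith
  · rw [hw1 F' h'.1]
    have := deg_nonneg (K := K) hw1 (F ∩ F')
    positivity
  · exact le_rfl

/-! ### Distance and transport cost -/

lemma fdist_conn {F F' : Finset V} (hF' : F' ∈ faces K i) (h : Conn i F F') :
    fdist K i F F' = 1 := by
  have h1 : Chain K i 1 F F' := ⟨F', hF', h, rfl⟩
  have hle : fdist K i F F' ≤ 1 := Nat.sInf_le h1
  have hmem : Chain K i (fdist K i F F') F F' :=
    Nat.sInf_mem (s := {n | Chain K i n F F'}) ⟨1, h1⟩
  have hne : fdist K i F F' ≠ 0 := by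
    intro h0
    rw [h0] at hmem
    exact h.1 hmem
  omega

lemma chain_lipschitz {f : Finset V → ℝ} {L : ℝ}
    (hL : ∀ F ∈ faces K i, ∀ F' ∈ faces K i, Conn i F F' → f F - f F' ≤ L) (n : ℕ) :
    ∀ F ∈ faces K i, ∀ F', Chain K i n F F' → f F - f F' ≤ L * n := by
  induction n with
  | zero =>
    intro F _ F' h
    have h : F = F' := h
    simp [h]
  | succ n ih =>
    rintro F hF F' ⟨G, hG, hFG, hGF'⟩
    have h1 := hL F hF G hG hFG
    have h2 := ih G hG F' hGF'
    push_cast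
    linarith

lemma fdist_lipschitz (hconn : ComplexConnected K i) {f : Finset V → ℝ} {L : ℝ}
    (hL : ∀ F ∈ faces K i, ∀ F' ∈ faces K i, Conn i F F' → f F - f F' ≤ L)
    {F F' : Finset V} (hF : F ∈ faces K i) (hF' : F' ∈ faces K i) :
    f F - f F' ≤ L * fdist K i F F' :=
  chain_lipschitz hL _ F hF F' (Nat.sInf_mem (s := {n | Chain K i n F F'}) (hconn F hF F' hF'))

/-- The easy half of Kantorovich duality. Existence of a coupling (the product measure) is needed
because `Wass` is a real `sInf`, which would be `0` on the empty set. -/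
lemma le_Wass (hconn : ComplexConnected K i) {f : Finset V → ℝ} {L : ℝ} (hLpos : 0 < L)
    (hL : ∀ F ∈ faces K i, ∀ F' ∈ faces K i, Conn i F F' → f F - f F' ≤ L)
    {μ ν : Finset V → ℝ} (hμ : ∀ F, 0 ≤ μ F) (hν : ∀ F, 0 ≤ ν F)
    (hμ1 : ∑ F ∈ faces K i, μ F = 1) (hν1 : ∑ F ∈ faces K i, ν F = 1) :
    (∑ F ∈ faces K i, μ F * f F - ∑ F ∈ faces K i, ν F * f F) / L ≤ Wass K i μ ν := by
  refine le_csInf ⟨_, fun F₁ F₂ => μ F₁ * ν F₂, fun F₁ F₂ => mul_nonneg (hμ _) (hν _),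
    fun F₁ _ => ?_, fun F₂ _ => ?_, rfl⟩ ?_
  · rw [← Finset.mul_sum, hν1, mul_one]
  · rw [← Finset.sum_mul, hμ1, one_mul]
  rintro c ⟨A, hA, hA1, hA2, rfl⟩
  rw [div_le_iff₀ hLpos]
  have e1 : ∑ F ∈ faces K i, μ F * f F =
      ∑ F₁ ∈ faces K i, ∑ F₂ ∈ faces K i, A F₁ F₂ * f F₁ :=
    Finset.sum_congr rfl fun F hF => by rw [← hA1 F hF, Finset.sum_mul]
  have e2 : ∑ F ∈ faces K i, ν F * f F =
      ∑ F₁ ∈ faces K i, ∑ F₂ ∈ faces K i, A F₁ F₂ * f F₂ := by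
    rw [Finset.sum_comm]
    exact Finset.sum_congr rfl fun F hF => by rw [← hA2 F hF, Finset.sum_mul]
  rw [e1, e2, ← Finset.sum_sub_distrib, Finset.sum_mul]
  refine Finset.sum_le_sum fun F₁ h₁ => ?_
  rw [← Finset.sum_sub_distrib, Finset.sum_mul]
  refine Finset.sum_le_sum fun F₂ h₂ => ?_
  have := mul_le_mul_of_nonneg_left (fdist_lipschitz hconn hL h₁ h₂) (hA F₁ F₂)
  linarith

lemma Wass_bddBelow (μ ν : Finset V → ℝ) :
    BddBelow {c : ℝ | ∃ A : Finset V → Finset V → ℝ,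
    (∀ F₁ F₂, 0 ≤ A F₁ F₂) ∧
    (∀ F₁ ∈ faces K i, ∑ F₂ ∈ faces K i, A F₁ F₂ = μ F₁) ∧
    (∀ F₂ ∈ faces K i, ∑ F₁ ∈ faces K i, A F₁ F₂ = ν F₂) ∧
    c = ∑ F₁ ∈ faces K i, ∑ F₂ ∈ faces K i, A F₁ F₂ * (fdist K i F₁ F₂ : ℝ)} := by
  refine ⟨0, ?_⟩
  rintro c ⟨A, hA, -, -, rfl⟩
  exact Finset.sum_nonneg fun F₁ _ => Finset.sum_nonneg fun F₂ _ =>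
    mul_nonneg (hA _ _) (Nat.cast_nonneg _)

lemma pm_scale (ε t : ℝ) (F G : Finset V) :
    pm K w i (t * ε) F G = (1 - t) * (if G = F then 1 else 0) + t * pm K w i ε F G := by
  unfold pm
  split_ifs <;> ring

/-- Convexity of the transport cost along the segment from the pair of Dirac masses
`m_F^0 = δ_F`, `m_{F'}^0 = δ_{F'}` to `m_F^ε`, `m_{F'}^ε`. -/
lemma Wass_scale (hw1 : ∀ F ∈ faces K i, w F = 1) {D : ℝ}
    (hD' : ∀ F ∈ faces K i, ∑ E ∈ F.powersetCard i, 1 / deg K w i E = 1 / D)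
    {ε t : ℝ} (h0 : 0 ≤ ε) (h1 : ε ≤ 1) (ht0 : 0 < t) (ht1 : t ≤ 1)
    {F F' : Finset V} (hF : F ∈ faces K i) (hF' : F' ∈ faces K i) :
    Wass K i (pm K w i (t * ε) F) (pm K w i (t * ε) F') ≤
      (1 - t) * fdist K i F F' + t * Wass K i (pm K w i ε F) (pm K w i ε F') := by
  suffices h : (Wass K i (pm K w i (t * ε) F) (pm K w i (t * ε) F') -
      (1 - t) * fdist K i F F') / t ≤ Wass K i (pm K w i ε F) (pm K w i ε F') by
    rw [div_le_iff₀ ht0] at h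
    linarith
  refine le_csInf ⟨_, fun F₁ F₂ => pm K w i ε F F₁ * pm K w i ε F' F₂,
    fun F₁ F₂ => mul_nonneg (pm_nonneg hw1 h0 h1 hF _) (pm_nonneg hw1 h0 h1 hF' _),
    fun F₁ _ => ?_, fun F₂ _ => ?_, rfl⟩ ?_
  · rw [← Finset.mul_sum, sum_pm hw1 hD' ε hF', mul_one]
  · rw [← Finset.sum_mul, sum_pm hw1 hD' ε hF, one_mul]
  rintro c ⟨A, hA, hA1, hA2, rfl⟩
  rw [div_le_iff₀ ht0, sub_le_iff_le_add]
  refine csInf_le (Wass_bddBelow _ _)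
    ⟨fun F₁ F₂ => (1 - t) * ((if F₁ = F then 1 else 0) * (if F₂ = F' then 1 else 0))
      + t * A F₁ F₂, ?_, ?_, ?_, ?_⟩
  · intro F₁ F₂
    have h2 : (0 : ℝ) ≤ 1 - t := by linarith
    have := hA F₁ F₂
    positivity
  · intro F₁ h₁
    rw [Finset.sum_add_distrib, ← Finset.mul_sum, ← Finset.mul_sum, ← Finset.mul_sum, hA1 F₁ h₁,
      pm_scale, Finset.sum_ite_eq' (faces K i) F', if_pos hF', mul_one]
  · intro F₂ h₂
    rw [Finset.sum_add_distrib, ← Finset.mul_sum, ← Finset.mul_sum, ← Finset.sum_mul, hA2 F₂ h₂,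
      pm_scale, Finset.sum_ite_eq' (faces K i) F, if_pos hF, one_mul]
  · have e : ∑ F₁ ∈ faces K i, ∑ F₂ ∈ faces K i,
        ((if F₁ = F then (1 : ℝ) else 0) * (if F₂ = F' then 1 else 0)) * (fdist K i F₁ F₂ : ℝ) =
        fdist K i F F' := by
      rw [Finset.sum_eq_single_of_mem F hF, Finset.sum_eq_single_of_mem F' hF']
      · simp
      · intro G _ hG; simp [hG]
      · intro G _ hG; simp [hG]
    rw [← e, Finset.sum_mul, Finset.mul_sum, ← Finset.sum_add_distrib]
    refine Finset.sum_congr rfl fun F₁ _ => ?_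
    rw [Finset.sum_mul, Finset.mul_sum, ← Finset.sum_add_distrib]
    exact Finset.sum_congr rfl fun F₂ _ => by ring

/-! ### Existence of the curvature limit -/

lemma kappa_antitone (hw1 : ∀ F ∈ faces K i, w F = 1) {D : ℝ}
    (hD' : ∀ F ∈ faces K i, ∑ E ∈ F.powersetCard i, 1 / deg K w i E = 1 / D)
    {F F' : Finset V} (hF : F ∈ faces K i) (hF' : F' ∈ faces K i) (h : Conn i F F') :
    AntitoneOn (fun ε => kappaEps K w i ε F F' / ε) (Set.Ioo 0 1) := by
  rintro a ⟨ha0, ha1⟩ b ⟨hb0, hb1⟩ hab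
  have hs := Wass_scale hw1 hD' hb0.le hb1.le (div_pos ha0 hb0) ((div_le_one hb0).2 hab) hF hF'
  rw [div_mul_cancel₀ a hb0.ne'] at hs
  simp only [kappaEps]
  rw [fdist_conn hF' h] at hs ⊢
  simp only [Nat.cast_one, div_one, mul_one] at hs ⊢
  rw [div_le_div_iff₀ hb0 ha0]
  have := mul_le_mul_of_nonneg_right hs hb0.le
  have e : (1 - a / b + a / b * Wass K i (pm K w i b F) (pm K w i b F')) * b =
      b - a + a * Wass K i (pm K w i b F) (pm K w i b F') := by
    field_simp
  rw [e] at this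
  linarith

/-- A function that is nonincreasing and bounded above on `(0, 1)` has a limit at `0+`, so its
`limUnder` there is genuine and satisfies the same bound. -/
lemma limUnder_le_of_antitoneOn {g : ℝ → ℝ} {C : ℝ} (hg : AntitoneOn g (Set.Ioo 0 1))
    (hC : ∀ x ∈ Set.Ioo (0 : ℝ) 1, g x ≤ C) :
    limUnder (nhdsWithin (0 : ℝ) (Set.Ioi 0)) g ≤ C := by
  have hb : BddAbove (g '' Set.Ioo 0 1) := ⟨C, by rintro _ ⟨x, hx, rfl⟩; exact hC x hx⟩
  have hlim := hg.tendsto_nhdsWithin_Ioo_right ⟨1 / 2, by norm_num, by norm_num⟩ hb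
  rw [hlim.limUnder_eq]
  exact csSup_le ⟨g (1 / 2), 1 / 2, by norm_num, rfl⟩
    (by rintro _ ⟨x, hx, rfl⟩; exact hC x hx)

end Helpers

/-- For an orientable, pure, connected `i`-dimensional simplicial
complex with weights `w(F) = 1` on `i`-faces and `w(E) = deg E` on `(i-1)`-faces,
such that `Σ_{E ∈ ∂F} 1/deg E = 1/D` for all `i`-faces `F` and `κ ≥ k` on connected
`i`-faces, every eigenvalue `λ ∉ {0, 2/D - (i+1)}` of `Δ_i^down` satisfies
`λ ≥ (i+1)(k-1) + 2/D`. -/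
theorem eigenvalue_lower_bound {V : Type*} [Fintype V] [LinearOrder V]
    (K : Finset (Finset V)) (i : ℕ) (hi : 1 ≤ i)
    (hK : IsComplex K) (hpure : IsPure K i) (hor : Orientable K i)
    (hconn : ComplexConnected K i)
    (w : Finset V → ℝ) (hwpos : ∀ F ∈ K, 0 < w F)
    (hw1 : ∀ F ∈ faces K i, w F = 1)
    (hw2 : ∀ E ∈ faces K (i - 1), w E = deg K w i E)
    (D : ℝ) (hD : 0 < D)
    (hD' : ∀ F ∈ faces K i, ∑ E ∈ F.powersetCard i, 1 / deg K w i E = 1 / D)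
    (k : ℝ)
    (hk : ∀ F ∈ faces K i, ∀ F' ∈ faces K i, Conn i F F' → k ≤ ricci K w i F F')
    (lam : ℝ)
    (hlam : ∃ f : Finset V → ℝ, (∃ F ∈ faces K i, f F ≠ 0) ∧
      ∀ F ∈ faces K i, lapDown K w i f F = lam * f F)
    (hlam0 : lam ≠ 0) (hlam1 : lam ≠ 2 / D - ((i : ℝ) + 1)) :
    ((i : ℝ) + 1) * (k - 1) + 2 / D ≤ lam := by
  obtain ⟨f, ⟨F₀, hF₀, hfF₀⟩, heig⟩ := hlam
  -- The eigenfunction is not constant, hence differs on some connected pair.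
  have hex : ∃ F ∈ faces K i, ∃ F' ∈ faces K i, Conn i F F' ∧ 0 < f F - f F' := by
    by_contra! hno
    have hle : ∀ F ∈ faces K i, ∀ F' ∈ faces K i, f F ≤ f F' := fun F hF F' hF' => by
      have := fdist_lipschitz hconn hno hF hF'
      linarith
    have hconst : ∀ F ∈ faces K i, f F = f F₀ := fun F hF =>
      le_antisymm (hle F hF F₀ hF₀) (hle F₀ hF₀ F hF)
    have h := heig F₀ hF₀
    rw [lapDown_const hw1 hD' f (f F₀) hconst hF₀] at h
    exact hlam1 (mul_right_cancel₀ hfF₀ h).symm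
  obtain ⟨G, hG, G', hG', hGG', hGpos⟩ := hex
  classical
  obtain ⟨⟨F, F'⟩, hmem, hmax⟩ := Finset.exists_max_image
    ((faces K i ×ˢ faces K i).filter fun p => Conn i p.1 p.2) (fun p => f p.1 - f p.2)
    ⟨(G, G'), by simp [hG, hG', hGG']⟩
  simp only [Finset.mem_filter, Finset.mem_product] at hmem hmax
  obtain ⟨⟨hF, hF'⟩, hFF'⟩ := hmem
  have hL : ∀ A ∈ faces K i, ∀ B ∈ faces K i, Conn i A B → f A - f B ≤ f F - f F' :=
    fun A hA B hB hAB => hmax (A, B) ⟨⟨hA, hB⟩, hAB⟩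
  have hLpos : 0 < f F - f F' := hGpos.trans_le (hL G hG G' hG' hGG')
  have hric : ricci K w i F F' ≤ 1 - (2 / D - lam) / ((i : ℝ) + 1) := by
    refine limUnder_le_of_antitoneOn (kappa_antitone hw1 hD' hF hF' hFF') ?_
    rintro ε ⟨h0, h1⟩
    have hW := le_Wass hconn hLpos hL (pm_nonneg hw1 h0.le h1.le hF)
      (pm_nonneg hw1 h0.le h1.le hF') (sum_pm hw1 hD' ε hF) (sum_pm hw1 hD' ε hF')
    rw [sum_pm_mul hw1 hD' ε f hF, sum_pm_mul hw1 hD' ε f hF', heig F hF, heig F' hF'] at hW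
    have e : ((1 - ε) * f F + ε / ((i : ℝ) + 1) * (2 / D * f F - lam * f F) -
        ((1 - ε) * f F' + ε / ((i : ℝ) + 1) * (2 / D * f F' - lam * f F'))) / (f F - f F') =
        1 - ε * (1 - (2 / D - lam) / ((i : ℝ) + 1)) := by
      rw [div_eq_iff hLpos.ne']
      ring
    rw [e] at hW
    simp only [kappaEps]
    rw [fdist_conn hF' hFF', div_le_iff₀ h0]
    simp only [Nat.cast_one, div_one]
    linarith
  have hkC := (hk F hF F' hF' hFF').trans hric
  have hi1 : (0 : ℝ) < (i : ℝ) + 1 := by positivity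
  have h : (2 / D - lam) / ((i : ℝ) + 1) ≤ 1 - k := by linarith
  rw [div_le_iff₀ hi1] at h
  linarith


end
end SCRicci
end

section
/- Let K be an abstract simplicial complex of dimension i that is pure, orientable, in which every (i−1)-face is contained in exactly two i-faces, with weights w(F) = 1 for every i-face F and w(E) = deg E = 2 for every (i−1)-face E, and whose i-dual graph G_K is connected with at least two vertices. Suppose κ(F, F') ≥ k for every pair of connected i-faces F ~ F' and some real number k, and suppose the graph Ollivier–Ricci curvature of G_K satisfies κ^G(x, y) ≥ k^G for every edge (x, y) of G_K and some positive real number k^G. Then 1 − k^G/2 ≥ k. -/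
/-!
Let `d = i + 1`. Because every `(i-1)`-face lies in exactly two `i`-faces, the dual graph is
`d`-regular (`gdeg_eq`), so `m_F^ε = (1 - ε/2) δ_F + (ε/2) m_F`, where `m_F` is the uniform measure on
the neighbors of `F` (`pm_eq`).

Distinct faces are at distance at least `1`, so any coupling of `μ` and `ν` costs at least
`1 - ∑ min(μ, ν)` (`one_sub_overlap_le_wass`). For an edge `F ~ F'` lying in `t` triangles of the dual
graph this gives `κ^G(F, F') ≤ t / d` (`kappaG_le`) and `κ_ε(F, F') ≤ ε (t + 2) / (2 d)`
(`one_sub_wass_lazyWalk_le`).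

The limit defining `κ(F, F')` exists: mixing a coupling of `m_F^ε, m_{F'}^ε` with the coupling of
`δ_F, δ_{F'}` shows that `κ_ε / ε` is nonincreasing in `ε` (`wass_lazyWalk_mul_le`), and it is bounded
above. Hence `κ ≤ (t + 2) / (2 d)` (`ricci_le`), and `κ + κ^G / 2 ≤ (t + 1) / d ≤ 1`, since a common neighbor of
`F` and `F'` is a neighbor of `F` other than `F'`. Connectedness and the presence of two faces
provide an edge at which to apply this.
-/

open Finset Filter

namespace SCRicci

variable {V : Type*}

noncomputable section

/-- The degree of the `i`-face `F` viewed as a vertex of the dual graph `G_K`: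
the number of `i`-faces adjacent (i.e. connected) to `F`. -/
def gdeg [DecidableEq V] (K : Finset (Finset V)) (i : ℕ) (F : Finset V) : ℕ :=
  ((faces K i).filter fun F' => F' ≠ F ∧ (F ∩ F').card = i).card

/-- The uniform probability measure on the neighbors of `F` in the dual graph
`G_K` (whose vertices are the `i`-faces of `K`, two of them being adjacent iff
their intersection is an `(i-1)`-face). -/
def gm [DecidableEq V] (K : Finset (Finset V)) (i : ℕ) (F F' : Finset V) : ℝ :=
  if F' ∈ faces K i ∧ F' ≠ F ∧ (F ∩ F').card = i then 1 / (gdeg K i F : ℝ) else 0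

/-- The graph Ollivier–Ricci curvature of two `i`-faces viewed as vertices of the
dual graph `G_K` (adjacency in `G_K` is exactly `Conn i` and the graph distance of
`G_K` is exactly `fdist`). -/
def kappaG [DecidableEq V] (K : Finset (Finset V)) (i : ℕ) (F F' : Finset V) : ℝ :=
  1 - Wass K i (gm K i F) (gm K i F') / (fdist K i F F' : ℝ)

/-! ### The dual graph -/

/-- The neighbors of the `i`-face `F` in the dual graph. -/
def nbrs [DecidableEq V] (K : Finset (Finset V)) (i : ℕ) (F : Finset V) : Finset (Finset V) :=
  (faces K i).filter fun F' => F' ≠ F ∧ (F ∩ F').card = i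

lemma mem_nbrs [DecidableEq V] {K : Finset (Finset V)} {i : ℕ} {F G : Finset V} :
    G ∈ nbrs K i F ↔ G ∈ faces K i ∧ G ≠ F ∧ (F ∩ G).card = i := by
  simp [nbrs]

lemma mem_nbrs_of_conn [DecidableEq V] {K : Finset (Finset V)} {i : ℕ} {F G : Finset V}
    (hG : G ∈ faces K i) (h : Conn i F G) : G ∈ nbrs K i F :=
  mem_nbrs.2 ⟨hG, h.1.symm, h.2⟩

lemma Conn.symm [DecidableEq V] {i : ℕ} {F G : Finset V} (h : Conn i F G) : Conn i G F :=
  ⟨h.1.symm, by rw [inter_comm]; exact h.2⟩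

lemma mem_faces_pred [DecidableEq V] {K : Finset (Finset V)} {i : ℕ} (hi : 1 ≤ i)
    (hK : IsComplex K) {F E : Finset V} (hF : F ∈ faces K i) (hE : E ⊆ F) (hc : E.card = i) :
    E ∈ faces K (i - 1) := by
  have hF' := (mem_filter.1 hF).1
  refine mem_filter.2 ⟨(hK F hF').2 E hE (card_pos.1 (by omega)), by omega⟩

/-- The dual graph is `(i+1)`-regular: sending a neighbor `F'` to `F ∩ F'` is a bijection from the
neighbors of `F` onto the `(i-1)`-faces of `F`. -/
lemma gdeg_eq [DecidableEq V] {K : Finset (Finset V)} {i : ℕ} (hi : 1 ≤ i) (hK : IsComplex K)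
    (h2 : ∀ E ∈ faces K (i - 1), ((faces K i).filter fun F => E ⊆ F).card = 2)
    {F : Finset V} (hF : F ∈ faces K i) : (nbrs K i F).card = i + 1 := by
  have hFc : F.card = i + 1 := (mem_filter.1 hF).2
  have hp : (F.powersetCard i).card = i + 1 := by
    rw [card_powersetCard, hFc, Nat.choose_succ_self_right]
  rw [← hp]
  refine card_bij (fun G _ => F ∩ G) ?_ ?_ ?_
  · intro G hG
    exact mem_powersetCard.2 ⟨inter_subset_left, (mem_nbrs.1 hG).2.2⟩
  · intro G₁ h₁ G₂ h₂ he
    obtain ⟨h₁f, h₁n, h₁c⟩ := mem_nbrs.1 h₁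
    obtain ⟨h₂f, h₂n, h₂c⟩ := mem_nbrs.1 h₂
    by_contra hne
    have h := h2 (F ∩ G₁) (mem_faces_pred hi hK hF inter_subset_left h₁c)
    have : 2 < ((faces K i).filter fun G => F ∩ G₁ ⊆ G).card := by
      refine two_lt_card.2 ⟨F, ?_, G₁, ?_, G₂, ?_, h₁n.symm, h₂n.symm, hne⟩
      · exact mem_filter.2 ⟨hF, inter_subset_left⟩
      · exact mem_filter.2 ⟨h₁f, inter_subset_right⟩
      · refine mem_filter.2 ⟨h₂f, ?_⟩
        have he' : F ∩ G₁ = F ∩ G₂ := he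
        rw [he']
        exact inter_subset_right
    omega
  · intro E hE
    obtain ⟨hEF, hEc⟩ := mem_powersetCard.1 hE
    have h := h2 E (mem_faces_pred hi hK hF hEF hEc)
    obtain ⟨G, hG, hGF⟩ := exists_mem_ne (h ▸ one_lt_two : 1 < ((faces K i).filter fun F => E ⊆ F).card) F
    obtain ⟨hGf, hEG⟩ := mem_filter.1 hG
    have hGc : G.card = i + 1 := (mem_filter.1 hGf).2
    have hsub : E ⊆ F ∩ G := subset_inter hEF hEG
    have hlt : (F ∩ G).card < i + 1 := by
      by_contra hge
      have e1 : F ∩ G = F := eq_of_subset_of_card_le inter_subset_left (by omega)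
      have e2 : F ∩ G = G := eq_of_subset_of_card_le inter_subset_right (by omega)
      exact hGF (e2.symm.trans e1)
    have he : E = F ∩ G := eq_of_subset_of_card_le hsub (by omega)
    exact ⟨G, mem_nbrs.2 ⟨hGf, hGF, by rw [← he, hEc]⟩, he.symm⟩

lemma one_le_fdist [DecidableEq V] {K : Finset (Finset V)} {i : ℕ} (hc : ComplexConnected K i)
    {F G : Finset V} (hF : F ∈ faces K i) (hG : G ∈ faces K i) (hne : F ≠ G) :
    1 ≤ fdist K i F G := by
  have hm : Chain K i (fdist K i F G) F G :=
    Nat.sInf_mem (s := {n | Chain K i n F G}) (hc F hF G hG)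
  rcases Nat.eq_zero_or_pos (fdist K i F G) with h0 | h0
  · rw [h0] at hm
    exact absurd hm hne
  · exact h0

lemma fdist_eq_one [DecidableEq V] {K : Finset (Finset V)} {i : ℕ} (hc : ComplexConnected K i)
    {F G : Finset V} (hF : F ∈ faces K i) (hG : G ∈ faces K i) (h : Conn i F G) :
    fdist K i F G = 1 :=
  le_antisymm (Nat.sInf_le (show Chain K i 1 F G from ⟨G, hG, h, rfl⟩))
    (one_le_fdist hc hF hG h.1)

/-! ### Couplings and the Wasserstein distance -/

/-- `A` is a coupling of `μ` and `ν`. -/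
def IsCoupling [DecidableEq V] (K : Finset (Finset V)) (i : ℕ) (μ ν : Finset V → ℝ)
    (A : Finset V → Finset V → ℝ) : Prop :=
  (∀ F₁ F₂, 0 ≤ A F₁ F₂) ∧
    (∀ F₁ ∈ faces K i, ∑ F₂ ∈ faces K i, A F₁ F₂ = μ F₁) ∧
    (∀ F₂ ∈ faces K i, ∑ F₁ ∈ faces K i, A F₁ F₂ = ν F₂)

/-- The transport cost of `A`. -/
def cost [DecidableEq V] (K : Finset (Finset V)) (i : ℕ) (A : Finset V → Finset V → ℝ) : ℝ :=
  ∑ F₁ ∈ faces K i, ∑ F₂ ∈ faces K i, A F₁ F₂ * (fdist K i F₁ F₂ : ℝ)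

lemma wass_le_cost [DecidableEq V] {K : Finset (Finset V)} {i : ℕ} {μ ν : Finset V → ℝ}
    {A : Finset V → Finset V → ℝ} (hA : IsCoupling K i μ ν A) : Wass K i μ ν ≤ cost K i A := by
  refine csInf_le ⟨0, ?_⟩ ⟨A, hA.1, hA.2.1, hA.2.2, rfl⟩
  rintro c ⟨B, hB, -, -, rfl⟩
  exact sum_nonneg fun _ _ => sum_nonneg fun _ _ => mul_nonneg (hB _ _) (Nat.cast_nonneg _)

/-- The product coupling shows that the infimum defining `Wass` is over a nonempty set, so that a
lower bound for all costs is a lower bound for `Wass`. -/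
lemma le_wass [DecidableEq V] {K : Finset (Finset V)} {i : ℕ} {μ ν : Finset V → ℝ}
    (hμ : ∀ F, 0 ≤ μ F) (hν : ∀ F, 0 ≤ ν F) (hμ1 : ∑ F ∈ faces K i, μ F = 1)
    (hν1 : ∑ F ∈ faces K i, ν F = 1) {b : ℝ}
    (hb : ∀ A, IsCoupling K i μ ν A → b ≤ cost K i A) : b ≤ Wass K i μ ν := by
  refine le_csInf ⟨_, fun F G => μ F * ν G, fun F G => mul_nonneg (hμ F) (hν G), ?_, ?_, rfl⟩ ?_
  · intro F _
    rw [← mul_sum, hν1, mul_one]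
  · intro G _
    rw [← sum_mul, hμ1, one_mul]
  · rintro c ⟨A, h1, h2, h3, rfl⟩
    exact hb A ⟨h1, h2, h3⟩

/-- Off the diagonal the distance is at least `1`, and the diagonal mass of a coupling at `F` is at
most `min (μ F) (ν F)`. -/
lemma one_sub_overlap_le_wass [DecidableEq V] {K : Finset (Finset V)} {i : ℕ}
    (hc : ComplexConnected K i) {μ ν : Finset V → ℝ}
    (hμ : ∀ F, 0 ≤ μ F) (hν : ∀ F, 0 ≤ ν F) (hμ1 : ∑ F ∈ faces K i, μ F = 1)
    (hν1 : ∑ F ∈ faces K i, ν F = 1) :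
    1 - ∑ F ∈ faces K i, min (μ F) (ν F) ≤ Wass K i μ ν := by
  refine le_wass hμ hν hμ1 hν1 fun A hA => ?_
  obtain ⟨h0, h1, h2⟩ := hA
  rw [← hμ1, ← sum_sub_distrib]
  refine sum_le_sum fun F hF => ?_
  have hrow : μ F - A F F ≤ ∑ G ∈ faces K i, A F G * (fdist K i F G : ℝ) := by
    rw [← h1 F hF, ← add_sum_erase _ _ hF, ← add_sum_erase _ _ hF, add_sub_cancel_left]
    have hle : ∑ G ∈ (faces K i).erase F, A F G
        ≤ ∑ G ∈ (faces K i).erase F, A F G * (fdist K i F G : ℝ) := by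
      refine sum_le_sum fun G hG => le_mul_of_one_le_right (h0 _ _) ?_
      obtain ⟨hne, hGf⟩ := mem_erase.1 hG
      exact_mod_cast one_le_fdist hc hF hGf hne.symm
    have := mul_nonneg (h0 F F) (Nat.cast_nonneg (α := ℝ) (fdist K i F F))
    linarith
  have ha : A F F ≤ μ F := by
    rw [← h1 F hF]
    exact single_le_sum (f := fun G => A F G) (fun G _ => h0 F G) hF
  have hb : A F F ≤ ν F := by
    rw [← h2 F hF]
    exact single_le_sum (f := fun G => A G F) (fun G _ => h0 G F) hF
  have := le_min ha hb
  linarith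

/-! ### The measures `gm` and `pm` -/

lemma gm_eq [DecidableEq V] {K : Finset (Finset V)} {i : ℕ} {F : Finset V}
    (hd : (nbrs K i F).card = i + 1) (G : Finset V) :
    gm K i F G = if G ∈ nbrs K i F then 1 / ((i : ℝ) + 1) else 0 := by
  have : gdeg K i F = i + 1 := hd
  simp only [gm, this, mem_nbrs]
  push_cast
  rfl

lemma gm_nonneg [DecidableEq V] {K : Finset (Finset V)} {i : ℕ} (F G : Finset V) :
    0 ≤ gm K i F G := by
  unfold gm
  split_ifs <;> positivity

lemma sum_gm [DecidableEq V] {K : Finset (Finset V)} {i : ℕ} {F : Finset V}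
    (hd : (nbrs K i F).card = i + 1) : ∑ G ∈ faces K i, gm K i F G = 1 := by
  have hs : (faces K i).filter (· ∈ nbrs K i F) = nbrs K i F := by
    ext G
    simp only [mem_filter, mem_nbrs]
    tauto
  simp only [gm_eq hd]
  rw [← sum_filter, hs, sum_const, hd, nsmul_eq_mul]
  push_cast
  field_simp

/-- With unit weights on the `i`-faces and all degrees equal to `2`, the measure `m_F^ε` is the lazy
random walk on the dual graph with laziness `1 - ε/2`. -/
lemma pm_eq [DecidableEq V] {K : Finset (Finset V)} {w : Finset V → ℝ} {i : ℕ} (hi : 1 ≤ i)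
    (hK : IsComplex K) (hw1 : ∀ F ∈ faces K i, w F = 1)
    (hdeg2 : ∀ E ∈ faces K (i - 1), deg K w i E = 2) {F : Finset V} (hF : F ∈ faces K i)
    (hd : (nbrs K i F).card = i + 1) (ε : ℝ) (G : Finset V) :
    pm K w i ε F G = (1 - ε / 2) * (if G = F then 1 else 0) + ε / 2 * gm K i F G := by
  have hi0 : (i : ℝ) + 1 ≠ 0 := by positivity
  rw [gm_eq hd]
  unfold pm
  by_cases hGF : G = F
  · have hn : G ∉ nbrs K i F := fun h => (mem_nbrs.1 h).2.1 hGF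
    have hs : ∑ E ∈ F.powersetCard i, w F / deg K w i E = ((i : ℝ) + 1) / 2 := by
      have : ∀ E ∈ F.powersetCard i, w F / deg K w i E = 1 / 2 := by
        intro E hE
        obtain ⟨hEF, hEc⟩ := mem_powersetCard.1 hE
        rw [hw1 F hF, hdeg2 E (mem_faces_pred hi hK hF hEF hEc)]
      rw [sum_congr rfl this, sum_const, card_powersetCard, (mem_filter.1 hF).2,
        Nat.choose_succ_self_right, nsmul_eq_mul]
      push_cast
      ring
    rw [if_pos hGF, if_pos hGF, if_neg hn, hs]
    field_simp
    ring
  · rw [if_neg hGF, if_neg hGF]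
    by_cases hn : G ∈ nbrs K i F
    · obtain ⟨h1, -, h3⟩ := mem_nbrs.1 hn
      rw [if_pos ⟨h1, h3⟩, if_pos hn, hw1 G h1,
        hdeg2 _ (mem_faces_pred hi hK hF inter_subset_left h3)]
      field_simp
      ring
    · rw [if_neg (fun h => hn (mem_nbrs.2 ⟨h.1, hGF, h.2⟩)), if_neg hn]
      ring

/-- The lazy random walk measure `(1 - ε/2) δ_F + (ε/2) m_F`. -/
def lazyWalk [DecidableEq V] (K : Finset (Finset V)) (i : ℕ) (ε : ℝ) (F G : Finset V) : ℝ :=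
  (1 - ε / 2) * (if G = F then 1 else 0) + ε / 2 * gm K i F G

lemma lazyWalk_nonneg [DecidableEq V] {K : Finset (Finset V)} {i : ℕ} {ε : ℝ} (h0 : 0 ≤ ε)
    (h1 : ε ≤ 1) (F G : Finset V) : 0 ≤ lazyWalk K i ε F G := by
  refine add_nonneg (mul_nonneg (by linarith) ?_) (mul_nonneg (by linarith) (gm_nonneg F G))
  split_ifs <;> norm_num

lemma sum_lazyWalk [DecidableEq V] {K : Finset (Finset V)} {i : ℕ} {F : Finset V}
    (hF : F ∈ faces K i) (hd : (nbrs K i F).card = i + 1) (ε : ℝ) :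
    ∑ G ∈ faces K i, lazyWalk K i ε F G = 1 := by
  simp only [lazyWalk]
  rw [sum_add_distrib, ← mul_sum, ← mul_sum, sum_gm hd, sum_ite_eq' (faces K i) F, if_pos hF]
  ring

/-! ### Curvature bounds at an edge -/

/-- An edge of the dual graph in `t` triangles has graph curvature at most `t / (i + 1)`. -/
lemma kappaG_le [DecidableEq V] {K : Finset (Finset V)} {i : ℕ} (hc : ComplexConnected K i)
    {F F' : Finset V} (hF : F ∈ faces K i) (hF' : F' ∈ faces K i) (h : Conn i F F')
    (hd : (nbrs K i F).card = i + 1) (hd' : (nbrs K i F').card = i + 1) :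
    kappaG K i F F' ≤ ((nbrs K i F ∩ nbrs K i F').card : ℝ) / ((i : ℝ) + 1) := by
  have hW := one_sub_overlap_le_wass hc (gm_nonneg F) (gm_nonneg F') (sum_gm hd) (sum_gm hd')
  have ho : ∑ G ∈ faces K i, min (gm K i F G) (gm K i F' G)
      ≤ ((nbrs K i F ∩ nbrs K i F').card : ℝ) / ((i : ℝ) + 1) := by
    have hs : (faces K i).filter (· ∈ nbrs K i F ∩ nbrs K i F') = nbrs K i F ∩ nbrs K i F' := by
      ext G
      simp only [mem_filter, mem_inter, mem_nbrs]
      tauto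
    calc ∑ G ∈ faces K i, min (gm K i F G) (gm K i F' G)
        ≤ ∑ G ∈ faces K i, if G ∈ nbrs K i F ∩ nbrs K i F' then 1 / ((i : ℝ) + 1) else 0 := by
          refine sum_le_sum fun G _ => ?_
          rw [gm_eq hd, gm_eq hd']
          by_cases h1 : G ∈ nbrs K i F <;> by_cases h2 : G ∈ nbrs K i F' <;> simp [h1, h2]
      _ = _ := by
          rw [← sum_filter, hs, sum_const, nsmul_eq_mul]
          ring
  simp only [kappaG, fdist_eq_one hc hF hF' h, Nat.cast_one, div_one]
  linarith

/-- The overlap of the two lazy walk measures is supported on `F`, `F'` and their common neighbors,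
and is at most `ε / (2 (i + 1))` at each of them. -/
lemma one_sub_wass_lazyWalk_le [DecidableEq V] {K : Finset (Finset V)} {i : ℕ}
    (hc : ComplexConnected K i) {F F' : Finset V} (hF : F ∈ faces K i) (hF' : F' ∈ faces K i)
    (h : Conn i F F') (hd : (nbrs K i F).card = i + 1) (hd' : (nbrs K i F').card = i + 1)
    {ε : ℝ} (h0 : 0 ≤ ε) (h1 : ε ≤ 1) :
    1 - Wass K i (lazyWalk K i ε F) (lazyWalk K i ε F')
      ≤ ε * (((nbrs K i F ∩ nbrs K i F').card + 2) / (2 * ((i : ℝ) + 1))) := by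
  have hW := one_sub_overlap_le_wass hc (lazyWalk_nonneg h0 h1 F) (lazyWalk_nonneg h0 h1 F')
    (sum_lazyWalk hF hd ε) (sum_lazyWalk hF' hd' ε)
  set T := insert F (insert F' (nbrs K i F ∩ nbrs K i F')) with hT
  have hTc : (T.card : ℝ) ≤ (nbrs K i F ∩ nbrs K i F').card + 2 := by
    have a := card_insert_le F (insert F' (nbrs K i F ∩ nbrs K i F'))
    have b := card_insert_le F' (nbrs K i F ∩ nbrs K i F')
    have : T.card ≤ (nbrs K i F ∩ nbrs K i F').card + 2 := by
      rw [hT]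
      omega
    exact_mod_cast this
  have hb : 0 ≤ ε / 2 * (1 / ((i : ℝ) + 1)) := by positivity
  have hFF' : F' ∈ nbrs K i F := mem_nbrs_of_conn hF' h
  have hF'F : F ∈ nbrs K i F' := mem_nbrs_of_conn hF h.symm
  have ho : ∑ G ∈ faces K i, min (lazyWalk K i ε F G) (lazyWalk K i ε F' G)
      ≤ T.card * (ε / 2 * (1 / ((i : ℝ) + 1))) := by
    have hs : (faces K i).filter (· ∈ T) ⊆ T := fun G hG => (mem_filter.1 hG).2
    calc ∑ G ∈ faces K i, min (lazyWalk K i ε F G) (lazyWalk K i ε F' G)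
        ≤ ∑ G ∈ faces K i, if G ∈ T then ε / 2 * (1 / ((i : ℝ) + 1)) else 0 := by
          refine sum_le_sum fun G _ => ?_
          by_cases e1 : G = F
          · refine (min_le_right _ _).trans ?_
            subst e1
            simp [lazyWalk, gm_eq hd', hF'F, h.1, hT]
          by_cases e2 : G = F'
          · refine (min_le_left _ _).trans ?_
            subst e2
            simp [lazyWalk, gm_eq hd, hFF', h.1.symm, hT]
          simp only [lazyWalk, gm_eq hd, gm_eq hd', e1, e2, hT, mem_insert, mem_inter,
            false_or, if_false, mul_zero, zero_add]
          by_cases n1 : G ∈ nbrs K i F <;> by_cases n2 : G ∈ nbrs K i F' <;>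
            simp [n1, n2]
      _ = ((faces K i).filter (· ∈ T)).card * (ε / 2 * (1 / ((i : ℝ) + 1))) := by
          rw [← sum_filter, sum_const, nsmul_eq_mul]
      _ ≤ _ := by
          gcongr
  have : T.card * (ε / 2 * (1 / ((i : ℝ) + 1)))
      ≤ ((nbrs K i F ∩ nbrs K i F').card + 2) * (ε / 2 * (1 / ((i : ℝ) + 1))) := by
    gcongr
  have e : ε * (((nbrs K i F ∩ nbrs K i F').card + 2) / (2 * ((i : ℝ) + 1)))
      = ((nbrs K i F ∩ nbrs K i F').card + 2) * (ε / 2 * (1 / ((i : ℝ) + 1))) := by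
    field_simp
  rw [e]
  linarith

/-- Scaling `ε` by `s ∈ [0, 1]` replaces each lazy walk measure by its mixture with the Dirac mass
at its center; mixing couplings accordingly bounds the new distance. -/
lemma wass_lazyWalk_mul_le [DecidableEq V] {K : Finset (Finset V)} {i : ℕ}
    (hc : ComplexConnected K i) {F F' : Finset V} (hF : F ∈ faces K i) (hF' : F' ∈ faces K i)
    (h : Conn i F F') (hd : (nbrs K i F).card = i + 1) (hd' : (nbrs K i F').card = i + 1)
    {ε s : ℝ} (h0 : 0 ≤ ε) (h1 : ε ≤ 1) (hs0 : 0 < s) (hs1 : s ≤ 1) :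
    Wass K i (lazyWalk K i (s * ε) F) (lazyWalk K i (s * ε) F')
      ≤ s * Wass K i (lazyWalk K i ε F) (lazyWalk K i ε F') + (1 - s) := by
  have key : (Wass K i (lazyWalk K i (s * ε) F) (lazyWalk K i (s * ε) F') - (1 - s)) / s
      ≤ Wass K i (lazyWalk K i ε F) (lazyWalk K i ε F') := by
    refine le_wass (lazyWalk_nonneg h0 h1 F) (lazyWalk_nonneg h0 h1 F')
      (sum_lazyWalk hF hd ε) (sum_lazyWalk hF' hd' ε) fun A hA => ?_
    obtain ⟨hA0, hA1, hA2⟩ := hA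
    rw [div_le_iff₀ hs0]
    have hB : IsCoupling K i (lazyWalk K i (s * ε) F) (lazyWalk K i (s * ε) F')
        (fun G G' => s * A G G' +
          (1 - s) * ((if G = F then 1 else 0) * (if G' = F' then 1 else 0))) := by
      refine ⟨fun G G' => ?_, fun G hG => ?_, fun G' hG' => ?_⟩
      · refine add_nonneg (mul_nonneg hs0.le (hA0 _ _)) (mul_nonneg (by linarith) ?_)
        split_ifs <;> norm_num
      · rw [sum_add_distrib, ← mul_sum, hA1 G hG, ← mul_sum, ← mul_sum,
          sum_ite_eq' (faces K i) F', if_pos hF']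
        simp only [lazyWalk]
        ring
      · rw [sum_add_distrib, ← mul_sum, hA2 G' hG', ← mul_sum, ← sum_mul,
          sum_ite_eq' (faces K i) F, if_pos hF]
        simp only [lazyWalk]
        ring
    have hcost : cost K i (fun G G' => s * A G G' +
          (1 - s) * ((if G = F then 1 else 0) * (if G' = F' then 1 else 0)))
        = s * cost K i A + (1 - s) := by
      have hδ : ∑ G ∈ faces K i, ∑ G' ∈ faces K i,
          ((if G = F then (1 : ℝ) else 0) * (if G' = F' then 1 else 0)) * (fdist K i G G' : ℝ)
          = 1 := by
        rw [sum_eq_single_of_mem F hF, sum_eq_single_of_mem F' hF']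
        · simp [fdist_eq_one hc hF hF' h]
        · intro G' _ hne
          simp [hne]
        · intro G _ hne
          simp [hne]
      calc _ = s * cost K i A + (1 - s) * ∑ G ∈ faces K i, ∑ G' ∈ faces K i,
          ((if G = F then (1 : ℝ) else 0) * (if G' = F' then 1 else 0))
            * (fdist K i G G' : ℝ) := by
            simp only [cost, mul_sum, ← sum_add_distrib]
            refine sum_congr rfl fun G _ => sum_congr rfl fun G' _ => ?_
            ring
        _ = _ := by rw [hδ, mul_one]
    have := wass_le_cost hB
    rw [hcost] at this
    linarith
  rw [div_le_iff₀ hs0] at key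
  linarith

/-- At an edge with `t` common neighbors the Ricci curvature is at most `(t + 2) / (2 (i + 1))`. The
proof includes the existence of the limit defining it: `κ_ε / ε` is antitone and bounded above. -/
lemma ricci_le [DecidableEq V] {K : Finset (Finset V)} {w : Finset V → ℝ} {i : ℕ} (hi : 1 ≤ i)
    (hK : IsComplex K) (hw1 : ∀ F ∈ faces K i, w F = 1)
    (hdeg2 : ∀ E ∈ faces K (i - 1), deg K w i E = 2)
    (hc : ComplexConnected K i) {F F' : Finset V} (hF : F ∈ faces K i) (hF' : F' ∈ faces K i)
    (h : Conn i F F') (hd : (nbrs K i F).card = i + 1) (hd' : (nbrs K i F').card = i + 1) :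
    ricci K w i F F' ≤ ((nbrs K i F ∩ nbrs K i F').card + 2) / (2 * ((i : ℝ) + 1)) := by
  have hκ : ∀ ε, kappaEps K w i ε F F'
      = 1 - Wass K i (lazyWalk K i ε F) (lazyWalk K i ε F') := by
    intro ε
    have e1 : pm K w i ε F = lazyWalk K i ε F :=
      funext fun G => pm_eq hi hK hw1 hdeg2 hF hd ε G
    have e2 : pm K w i ε F' = lazyWalk K i ε F' :=
      funext fun G => pm_eq hi hK hw1 hdeg2 hF' hd' ε G
    simp only [kappaEps, fdist_eq_one hc hF hF' h, Nat.cast_one, div_one, e1, e2]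
  have hub : ∀ ε ∈ Set.Ioo (0 : ℝ) 1, kappaEps K w i ε F F' / ε
      ≤ ((nbrs K i F ∩ nbrs K i F').card + 2) / (2 * ((i : ℝ) + 1)) := by
    rintro ε ⟨h0, h1⟩
    rw [div_le_iff₀ h0, hκ, mul_comm]
    exact one_sub_wass_lazyWalk_le hc hF hF' h hd hd' h0.le h1.le
  have hanti : AntitoneOn (fun ε => kappaEps K w i ε F F' / ε) (Set.Ioo (0 : ℝ) 1) := by
    rintro δ ⟨hδ0, hδ1⟩ ε ⟨hε0, hε1⟩ hle
    have := wass_lazyWalk_mul_le hc hF hF' h hd hd' hε0.le hε1.le (div_pos hδ0 hε0)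
      ((div_le_one hε0).2 hle)
    rw [div_mul_cancel₀ δ hε0.ne'] at this
    simp only [hκ]
    rw [le_div_iff₀ hδ0]
    have e : (1 - Wass K i (lazyWalk K i ε F) (lazyWalk K i ε F')) / ε * δ
        = δ / ε * (1 - Wass K i (lazyWalk K i ε F) (lazyWalk K i ε F')) := by ring
    rw [e]
    linarith
  have hlim := hanti.tendsto_nhdsWithin_Ioo_right ⟨1 / 2, by norm_num, by norm_num⟩
    ⟨_, by rintro _ ⟨ε, hε, rfl⟩; exact hub ε hε⟩
  have hr : ricci K w i F F' = _ := hlim.limUnder_eq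
  rw [hr]
  refine le_of_tendsto hlim ?_
  filter_upwards [Ioo_mem_nhdsGT (show (0 : ℝ) < 1 by norm_num)] with ε hε using hub ε hε

/-- For an orientable, pure `i`-dimensional simplicial complex in
which every `(i-1)`-face lies in exactly two `i`-faces, with weights `w(F) = 1`
on `i`-faces and `w(E) = deg E = 2` on `(i-1)`-faces, whose dual graph `G_K` is
connected with at least two vertices, if `κ ≥ k` on connected `i`-faces and the
graph Ollivier–Ricci curvature of `G_K` is `≥ k^G > 0` on edges, then
`1 - k^G/2 ≥ k`. -/
theorem ricci_dual_graph {V : Type*} [Fintype V] [LinearOrder V]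
    (K : Finset (Finset V)) (i : ℕ) (hi : 1 ≤ i)
    (hK : IsComplex K) (hpure : IsPure K i) (hor : Orientable K i)
    (h2 : ∀ E ∈ faces K (i - 1), ((faces K i).filter fun F => E ⊆ F).card = 2)
    (w : Finset V → ℝ) (hwpos : ∀ F ∈ K, 0 < w F)
    (hw1 : ∀ F ∈ faces K i, w F = 1)
    (hw2 : ∀ E ∈ faces K (i - 1), w E = 2)
    (hdeg2 : ∀ E ∈ faces K (i - 1), deg K w i E = 2)
    (hGconn : ComplexConnected K i)
    (hG2 : ∃ F ∈ faces K i, ∃ F' ∈ faces K i, F ≠ F')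
    (k : ℝ)
    (hk : ∀ F ∈ faces K i, ∀ F' ∈ faces K i, Conn i F F' → k ≤ ricci K w i F F')
    (kG : ℝ) (hkGpos : 0 < kG)
    (hkG : ∀ F ∈ faces K i, ∀ F' ∈ faces K i, Conn i F F' → kG ≤ kappaG K i F F') :
    k ≤ 1 - kG / 2 := by
  obtain ⟨F, hF, F₀, hF₀, hne⟩ := hG2
  obtain ⟨F', hF', hconn⟩ : ∃ F' ∈ faces K i, Conn i F F' := by
    obtain ⟨n, hn⟩ := hGconn F hF F₀ hF₀
    cases n with
    | zero => exact absurd hn hne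
    | succ n =>
      obtain ⟨G, hG, hFG, -⟩ := hn
      exact ⟨G, hG, hFG⟩
  have hd := gdeg_eq hi hK h2 hF
  have hd' := gdeg_eq hi hK h2 hF'
  have hκ := (hk F hF F' hF' hconn).trans
    (ricci_le hi hK hw1 hdeg2 hGconn hF hF' hconn hd hd')
  have hκG := (hkG F hF F' hF' hconn).trans (kappaG_le hGconn hF hF' hconn hd hd')
  -- `F'` is a neighbor of `F` but not of itself, so there are at most `i` common neighbors.
  have ht : (nbrs K i F ∩ nbrs K i F').card < i + 1 := by
    rw [← hd]
    refine card_lt_card ((ssubset_iff_of_subset inter_subset_left).2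
      ⟨F', mem_nbrs_of_conn hF' hconn, fun hm => ?_⟩)
    exact (mem_nbrs.1 (mem_inter.1 hm).2).2.1 rfl
  have ht' : ((nbrs K i F ∩ nbrs K i F').card : ℝ) + 1 ≤ (i : ℝ) + 1 := by exact_mod_cast ht
  have hi0 : (0 : ℝ) < (i : ℝ) + 1 := by positivity
  have hsum : (((nbrs K i F ∩ nbrs K i F').card : ℝ) + 2) / (2 * ((i : ℝ) + 1))
      + ((nbrs K i F ∩ nbrs K i F').card : ℝ) / ((i : ℝ) + 1) / 2
      = (((nbrs K i F ∩ nbrs K i F').card : ℝ) + 1) / ((i : ℝ) + 1) := by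
    field_simp
    ring
  have hone := (div_le_one hi0).2 ht'
  linarith

end
end SCRicci
end

section
/- Let F and F' be i-faces of an abstract simplicial complex K with F ∩ F' = E an (i−1)-face. Then for every (i−1)-face E' ∈ ∂F with E' ≠ E, the set Γ_{E'}(F) ∩ Γ(F') has at most one element, where Γ(F) is the set of i-faces connected to F and Γ_{E'}(F) = { F̄ ∈ Γ(F) : F ∩ F̄ = E' }. -/
/-!
Since `F ∩ F'` has `i` elements, `F' \ F` is a single vertex `v`. A face `Fb` with `F ∩ Fb = E'`
and `#(F' ∩ Fb) = i` must contain `v`: otherwise `F' ∩ Fb ⊆ E ∩ E'`, which has fewer than `i`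
elements because `E ≠ E'` both have `i` elements. So `Fb ⊇ insert v E'`, and since both sides have
`i + 1` elements, `Fb = insert v E'` is determined by `F'` and `E'`.
-/

open Finset Filter

namespace SCRicci

variable {V : Type*}

/-- Let `F`, `F'` be `i`-faces with `F ∩ F' = E` an `(i-1)`-face.
For every `(i-1)`-face `E' ∈ ∂F` with `E' ≠ E`, the set `Γ_{E'}(F) ∩ Γ(F')` has at
most one element. Here `Γ(F')` is the set of `i`-faces connected to `F'` and
`Γ_{E'}(F) = {F̄ ∈ Γ(F) : F ∩ F̄ = E'}`. -/
theorem neighbor_unique {V : Type*} [Fintype V] [DecidableEq V]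
    (K : Finset (Finset V)) (i : ℕ) (hK : IsComplex K)
    (F F' E E' : Finset V) (hF : F ∈ faces K i) (hF' : F' ∈ faces K i)
    (hE : F ∩ F' = E) (hEcard : E.card = i)
    (hE'sub : E' ⊆ F) (hE'card : E'.card = i) (hne : E' ≠ E) :
    ((faces K i).filter fun Fb =>
      (Fb ≠ F ∧ F ∩ Fb = E') ∧ (Fb ≠ F' ∧ (F' ∩ Fb).card = i)).card ≤ 1 := by
  have hFc' : F'.card = i + 1 := (Finset.mem_filter.mp hF').2
  obtain ⟨v, hv⟩ : ∃ v, F' \ F = {v} := by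
    rw [← Finset.card_eq_one]
    have h := Finset.card_sdiff_add_card_inter F' F
    rw [Finset.inter_comm F' F, hE] at h
    omega
  have hvF : v ∈ F' ∧ v ∉ F := by
    rw [← Finset.mem_sdiff, hv]
    exact Finset.mem_singleton_self v
  have key : ∀ Fb : Finset V, Fb.card = i + 1 → F ∩ Fb = E' → (F' ∩ Fb).card = i →
      Fb = insert v E' := by
    intro Fb hc h1 h2
    have hvb : v ∈ Fb := by
      by_contra hvb
      have hsub : ∀ x ∈ F' ∩ Fb, x ∈ E ∧ x ∈ E' := by
        intro x hx
        obtain ⟨hx', hxb⟩ := Finset.mem_inter.mp hx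
        have hxF : x ∈ F := by
          by_contra hxF
          have hxv : x ∈ F' \ F := Finset.mem_sdiff.mpr ⟨hx', hxF⟩
          rw [hv, Finset.mem_singleton] at hxv
          exact hvb (hxv ▸ hxb)
        rw [← hE, ← h1]
        exact ⟨Finset.mem_inter.mpr ⟨hxF, hx'⟩, Finset.mem_inter.mpr ⟨hxF, hxb⟩⟩
      -- `F' ∩ Fb` lies in both `E` and `E'`; equal cardinalities force it to equal each of them.
      have e1 : F' ∩ Fb = E := Finset.eq_of_subset_of_card_le (fun x hx => (hsub x hx).1) (by omega)
      have e2 : F' ∩ Fb = E' :=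
        Finset.eq_of_subset_of_card_le (fun x hx => (hsub x hx).2) (by omega)
      exact hne (e2.symm.trans e1)
    symm
    apply Finset.eq_of_subset_of_card_le
    · apply Finset.insert_subset hvb
      rw [← h1]
      exact Finset.inter_subset_right
    · rw [Finset.card_insert_of_notMem (fun h => hvF.2 (hE'sub h))]
      omega
  rw [Finset.card_le_one]
  intro A hA B hB
  simp only [faces, Finset.mem_filter] at hA hB
  rw [key A hA.1.2 hA.2.1.2 hA.2.2.2, key B hB.1.2 hB.2.1.2 hB.2.2.2]

end SCRicci
end

section
/- Let K be a pure i-dimensional orientable abstract simplicial complex with weights w(F) = 1 for every i-face F and w(E) = deg E for every (i−1)-face E, and suppose there is a constant D > 0 with Σ_{E ∈ ∂F} 1/deg E = 1/D for every i-face F. Then every non-zero constant function f : S_i(K) → ℝ is an eigenfunction of the i-down Laplacian Δ_i^down with eigenvalue 2/D − (i+1), i.e., (Δ_i^down f)(F) = (Σ_{E ∈ ∂F} 2/deg E − (i+1))·f(F) for every i-face F. -/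
/-!
For a face `E` of an `i`-face `F`, exactly `deg E - 1` other `i`-faces contain `E`
(`card_other_faces`), so on the constant function `c` the `E`-term of `Δ_i^down` at `F` is
`(1 / deg E) * (c - (deg E - 1) * c) = (2 / deg E - 1) * c`. Summing over the `i + 1` faces
`E ∈ ∂F` gives the eigenvalue `∑ 2 / deg E - (i + 1)`, which is `2 / D - (i + 1)` by hypothesis.
-/

open Finset Filter

namespace SCRicci

variable {V : Type*}

noncomputable section

/-- With unit weights on the `i`-faces, `deg E` counts the `i`-faces containing `E`; removing
`F` itself leaves `deg E - 1` of them. -/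
lemma card_other_faces [DecidableEq V] {K : Finset (Finset V)} {i : ℕ} {w : Finset V → ℝ}
    (hw1 : ∀ F ∈ faces K i, w F = 1) {F E : Finset V} (hF : F ∈ faces K i) (hE : E ⊆ F) :
    (#((faces K i).filter fun F' => F' ≠ F ∧ E ⊆ F') : ℝ) = deg K w i E - 1 := by
  have hdeg : deg K w i E = #((faces K i).filter fun F' => E ⊆ F') := by
    rw [deg, ← Finset.sum_filter, Finset.sum_congr rfl
      (fun G hG => hw1 G (Finset.mem_filter.1 hG).1)]
    simp
  have herase : ((faces K i).filter fun F' => F' ≠ F ∧ E ⊆ F')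
      = ((faces K i).filter fun F' => E ⊆ F').erase F := by
    ext G
    simp only [Finset.mem_filter, Finset.mem_erase]
    tauto
  have hmem : F ∈ (faces K i).filter fun F' => E ⊆ F' := Finset.mem_filter.2 ⟨hF, hE⟩
  rw [herase, hdeg, ← Finset.card_erase_add_one hmem]
  push_cast
  ring

/-- For a pure orientable `i`-dimensional complex with weights
`w(F) = 1` on `i`-faces and `w(E) = deg E` on `(i-1)`-faces, such that
`Σ_{E ∈ ∂F} 1/deg E = 1/D` for every `i`-face `F`, every non-zero constant
function is an eigenfunction of `Δ_i^down` with eigenvalue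
`2/D - (i+1) = Σ_{E ∈ ∂F} 2/deg E - (i+1)`. -/
theorem const_is_eigenfunction {V : Type*} [Fintype V] [LinearOrder V]
    (K : Finset (Finset V)) (i : ℕ) (hi : 1 ≤ i)
    (hK : IsComplex K) (hpure : IsPure K i) (hor : Orientable K i)
    (w : Finset V → ℝ) (hwpos : ∀ F ∈ K, 0 < w F)
    (hw1 : ∀ F ∈ faces K i, w F = 1)
    (hw2 : ∀ E ∈ faces K (i - 1), w E = deg K w i E)
    (D : ℝ) (hD : 0 < D)
    (hD' : ∀ F ∈ faces K i, ∑ E ∈ F.powersetCard i, 1 / deg K w i E = 1 / D)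
    (f : Finset V → ℝ) (c : ℝ) (hc : c ≠ 0) (hf : ∀ F, f F = c) :
    ∀ F ∈ faces K i,
      lapDown K w i f F
        = (∑ E ∈ F.powersetCard i, 2 / deg K w i E - ((i : ℝ) + 1)) * f F ∧
      lapDown K w i f F = (2 / D - ((i : ℝ) + 1)) * f F := by
  intro F hF
  have hcardF : F.card = i + 1 := (Finset.mem_filter.1 hF).2
  have hmain : lapDown K w i f F
      = (∑ E ∈ F.powersetCard i, 2 / deg K w i E - ((i : ℝ) + 1)) * f F := by
    have hterm : ∀ E ∈ F.powersetCard i, (1 / deg K w i E) *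
        (f F - ∑ F' ∈ (faces K i).filter (fun F' => F' ≠ F ∧ E ⊆ F'), f F')
        = (2 / deg K w i E - 1) * c := by
      intro E hE
      have hcard := card_other_faces hw1 hF (Finset.mem_powersetCard.1 hE).1
      -- `deg E ≥ 1` because `F` contains `E`, so the division by `deg E` is genuine.
      have hpos : deg K w i E ≠ 0 := by
        intro h0
        have h := Nat.cast_nonneg (α := ℝ)
          (#((faces K i).filter fun F' => F' ≠ F ∧ E ⊆ F'))
        rw [hcard, h0] at h
        norm_num at h
      simp only [hf, Finset.sum_const, nsmul_eq_mul]
      rw [hcard]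
      field_simp
      ring
    rw [lapDown, Finset.sum_congr rfl hterm, ← Finset.sum_mul, Finset.sum_sub_distrib, hf F]
    simp [Finset.card_powersetCard, hcardF]
  refine ⟨hmain, ?_⟩
  have htwo : ∑ E ∈ F.powersetCard i, 2 / deg K w i E = 2 / D := by
    calc ∑ E ∈ F.powersetCard i, 2 / deg K w i E
        = 2 * ∑ E ∈ F.powersetCard i, 1 / deg K w i E := by
          rw [Finset.mul_sum]
          exact Finset.sum_congr rfl fun E _ => by ring
      _ = 2 / D := by rw [hD' F hF]; ring
  rw [hmain, htwo]

end
end SCRicci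
end

section
/- Let K be the two-dimensional simplicial complex of the tetrahedron: the collection of all nonempty subsets of a 4-element vertex set of cardinality at most 3, with weights w(F) = 1 for every 2-face F and w(E) = deg E for every edge and vertex E (so deg E = 2 for every edge E). Then for any two distinct 2-faces F and F' of K (which are necessarily connected), the Ricci curvature satisfies κ(F, F') = 2/3. -/
/-!
Any two distinct `2`-faces of the tetrahedron share an edge, so the distance on its four
`2`-faces is the discrete one (`fdist_tetra`). Every edge has degree `2` (`deg_tetra`), so `m_F^ε`
puts mass `1 - ε/2` on `F` and `ε/6` on each of the other three faces (`pm_tetra`). Hence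
`m_F^ε` and `m_{F'}^ε` differ only by a mass `(1 - ε/2) - ε/6 = 1 - 2ε/3` that sits at `F` in the
first and at `F'` in the second. Moving exactly this mass costs `1 - 2ε/3`, and no coupling does
better, because the mass leaving `F` is at least `m_F^ε(F) - m_{F'}^ε(F)` (`wass_tetra`). So
`κ_ε(F, F') = 2ε/3` for all `0 < ε ≤ 3/2`, and dividing by `ε` gives the limit `2/3`.
-/

open Finset Filter

namespace SCRicci

variable {V : Type*}

noncomputable section

/-- The two-dimensional simplicial complex of the tetrahedron: all nonempty subsets
of a 4-element vertex set of cardinality at most 3. -/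
def tetra : Finset (Finset (Fin 4)) :=
  (Finset.univ : Finset (Finset (Fin 4))).filter fun s => s.Nonempty ∧ s.card ≤ 3

theorem card_inter_tetra : ∀ F ∈ faces tetra 2, ∀ F' ∈ faces tetra 2, F ≠ F' →
    (F ∩ F').card = 2 := by
  decide

theorem fdist_tetra {F F' : Finset (Fin 4)} (hF : F ∈ faces tetra 2)
    (hF' : F' ∈ faces tetra 2) : fdist tetra 2 F F' = if F = F' then 0 else 1 := by
  unfold fdist
  split_ifs with h
  · exact Nat.sInf_eq_zero.2 (Or.inl h)
  · have h1 : Chain tetra 2 1 F F' := ⟨F', hF', ⟨h, card_inter_tetra F hF F' hF' h⟩, rfl⟩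
    refine le_antisymm (Nat.sInf_le h1) ?_
    refine le_csInf ⟨1, h1⟩ fun n hn => ?_
    rcases n with _ | n
    · exact absurd hn h
    · omega

theorem deg_tetra {w : Finset (Fin 4) → ℝ} (hw2 : ∀ F ∈ faces tetra 2, w F = 1)
    {E : Finset (Fin 4)} (hE : E.card = 2) : deg tetra w 2 E = 2 := by
  have hcard : ∀ E : Finset (Fin 4), E.card = 2 →
      ((faces tetra 2).filter fun F => E ⊆ F).card = 2 := by decide
  unfold deg
  rw [← Finset.sum_filter, Finset.sum_congr rfl fun F hF => hw2 F (Finset.mem_filter.1 hF).1]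
  simp [hcard E hE]

theorem pm_tetra {w : Finset (Fin 4) → ℝ} (hw2 : ∀ F ∈ faces tetra 2, w F = 1) (ε : ℝ)
    {F G : Finset (Fin 4)} (hF : F ∈ faces tetra 2) (hG : G ∈ faces tetra 2) :
    pm tetra w 2 ε F G = if G = F then 1 - ε / 2 else ε / 6 := by
  unfold pm
  split_ifs with h hadj
  · have hcard : F.card = 3 := (Finset.mem_filter.1 hF).2
    have hsum : ∑ E ∈ F.powersetCard 2, w F / deg tetra w 2 E = 3 / 2 := by
      rw [Finset.sum_congr rfl fun E hE => by
        rw [hw2 F hF, deg_tetra hw2 (Finset.mem_powersetCard.1 hE).2]]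
      rw [Finset.sum_const, Finset.card_powersetCard, hcard]
      norm_num [Nat.choose]
    rw [hsum]
    push_cast
    ring
  · rw [hw2 G hG, deg_tetra hw2 hadj.2]
    push_cast
    ring
  · exact absurd ⟨hG, card_inter_tetra F hF G hG (Ne.symm h)⟩ hadj

/-- The bound `ε ≤ 3/2` makes the transported mass `1 - 2ε/3` nonnegative. -/
theorem wass_tetra {w : Finset (Fin 4) → ℝ} (hw2 : ∀ F ∈ faces tetra 2, w F = 1) {ε : ℝ}
    (h0 : 0 ≤ ε) (h1 : ε ≤ 3 / 2) {F F' : Finset (Fin 4)} (hF : F ∈ faces tetra 2)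
    (hF' : F' ∈ faces tetra 2) (hne : F ≠ F') :
    Wass tetra 2 (pm tetra w 2 ε F) (pm tetra w 2 ε F') = 1 - 2 * ε / 3 := by
  unfold Wass
  refine IsLeast.csInf_eq ⟨?_, ?_⟩
  ·
    -- Leave `ε/6` in place at every face and move the excess `1 - 2ε/3` from `F` to `F'`.
    refine ⟨fun G H => (if G = H then ε / 6 else 0) +
      (if G = F then (if H = F' then 1 - 2 * ε / 3 else 0) else 0), ?_, ?_, ?_, ?_⟩
    · intro G H
      dsimp only
      split_ifs <;> linarith
    · intro G hG
      rw [pm_tetra hw2 ε hF hG, Finset.sum_add_distrib, Finset.sum_ite_eq, if_pos hG]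
      split_ifs with h
      · rw [Finset.sum_ite_eq', if_pos hF']
        ring
      · simp
    · intro H hH
      rw [pm_tetra hw2 ε hF' hH, Finset.sum_add_distrib, Finset.sum_ite_eq', if_pos hH,
        Finset.sum_ite_eq', if_pos hF]
      split_ifs <;> ring
    · have hterm : ∀ G ∈ faces tetra 2, ∀ H ∈ faces tetra 2,
          ((if G = H then ε / 6 else 0) +
            (if G = F then (if H = F' then 1 - 2 * ε / 3 else 0) else 0)) *
            (fdist tetra 2 G H : ℝ) =
          if G = F then (if H = F' then 1 - 2 * ε / 3 else 0) else 0 := by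
        intro G hG H hH
        rw [fdist_tetra hG hH]
        by_cases hGH : G = H
        · subst hGH
          by_cases hGF : G = F
          · subst hGF
            simp [hne]
          · simp [hGF]
        · simp [hGH]
      rw [Finset.sum_congr rfl fun G hG => Finset.sum_congr rfl (hterm G hG)]
      rw [Finset.sum_eq_single_of_mem F hF fun G _ hG => by simp [hG]]
      simp [hF']
  · rintro c ⟨A, hA, hrow, hcol, rfl⟩
    have hr := hrow F hF
    have hc := hcol F hF
    rw [pm_tetra hw2 ε hF hF, if_pos rfl] at hr
    rw [pm_tetra hw2 ε hF' hF, if_neg hne] at hc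
    have hdiag : A F F ≤ ε / 6 :=
      hc ▸ Finset.single_le_sum (f := fun G => A G F) (fun G _ => hA G F) hF
    have hnn : ∀ G ∈ faces tetra 2,
        0 ≤ ∑ H ∈ faces tetra 2, A G H * (fdist tetra 2 G H : ℝ) :=
      fun G _ => Finset.sum_nonneg fun H _ => mul_nonneg (hA G H) (Nat.cast_nonneg _)
    -- The total cost is at least the mass that leaves `F`.
    refine le_trans ?_ (Finset.single_le_sum hnn hF)
    have hterm : ∀ H ∈ faces tetra 2, A F H * (fdist tetra 2 F H : ℝ) =
        A F H - if F = H then A F H else 0 := by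
      intro H hH
      rw [fdist_tetra hF hH]
      split_ifs <;> simp
    rw [Finset.sum_congr rfl hterm, Finset.sum_sub_distrib, hr, Finset.sum_ite_eq, if_pos hF]
    linarith

/-- In the tetrahedron complex, with weights `w(F) = 1` on
`2`-faces and `w(E) = deg E` on edges and vertices, the Ricci curvature of any
two distinct `2`-faces equals `2/3`. -/
theorem tetra_ricci (w : Finset (Fin 4) → ℝ) (hwpos : ∀ F ∈ tetra, 0 < w F)
    (hw2 : ∀ F ∈ faces tetra 2, w F = 1)
    (hw1 : ∀ E ∈ faces tetra 1, w E = deg tetra w 2 E)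
    (hw0 : ∀ v ∈ faces tetra 0, w v = deg tetra w 1 v)
    (F F' : Finset (Fin 4)) (hF : F ∈ faces tetra 2) (hF' : F' ∈ faces tetra 2)
    (hne : F ≠ F') :
    ricci tetra w 2 F F' = 2 / 3 := by
  refine Tendsto.limUnder_eq ?_
  refine tendsto_const_nhds.congr' ?_
  have hev : ∀ᶠ ε : ℝ in nhdsWithin 0 (Set.Ioi 0), ε ∈ Set.Ioo (0 : ℝ) (3 / 2) :=
    Ioo_mem_nhdsGT (by norm_num)
  filter_upwards [hev] with ε hε
  have hpos : ε ≠ 0 := hε.1.ne'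
  rw [kappaEps, wass_tetra hw2 hε.1.le hε.2.le hF hF' hne, fdist_tetra hF hF', if_neg hne]
  push_cast
  field_simp
  ring

end
end SCRicci
end
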